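/- arXiv:2006.15866 — 2 statements merged into one kernel-verified Lean document; each statement's English description precedes it below -/
import Mathlib

section
/- Assume the oscillating wave speed, so that q_ℓ = (−1)^{ℓ+1} q with q := (c₂ − c₁)/(c₂ + c₁). Then for every 2 ≤ ℓ ≤ n, β_ℓ = ( e^{−i(δ_{ℓ−1} + δ_ℓ)} / (1 − q²) ) · ( (1 − q² e^{2 i δ_ℓ}) β_{ℓ−2} + (−1)^{ℓ} q (1 − e^{2 i δ_ℓ}) e^{2 i δ_{ℓ−1}} · conj(β_{ℓ−2}) ). -/
/-!
Consecutive reflection coefficients are opposite: `q_{ℓ-1} = -s` and `q_ℓ = s` with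
`s = (-1)^(ℓ+1) q` (`oscillating_coefficient`). Composing the two corresponding steps of the
recursion, the prefactors multiply to `1 / ((1 - s) (1 + s)) = 1 / (1 - q²)`; since conjugation
inverts the phases `e^{-iδ}`, collecting the coefficients of `β_{ℓ-2}` and of its conjugate gives
the formula (`compose_two_steps`).
-/

/-- The reflection coefficient alternates in sign. -/
lemma oscillating_coefficient (c₁ c₂ : ℝ) (c : ℕ → ℝ)
    (hc : ∀ j, c j = if Odd j then c₁ else c₂) (ℓ : ℕ) :
    (c (ℓ + 1) - c ℓ) / (c (ℓ + 1) + c ℓ) = (-1) ^ (ℓ + 1) * ((c₂ - c₁) / (c₂ + c₁)) := by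
  rw [hc, hc]
  rcases Nat.even_or_odd ℓ with he | ho
  · have h1 : Odd (ℓ + 1) := he.add_one
    rw [if_pos h1, if_neg (Nat.not_odd_iff_even.mpr he), h1.neg_one_pow, add_comm c₁ c₂]
    ring
  · have h1 : Even (ℓ + 1) := ho.add_one
    rw [if_neg (Nat.not_odd_iff_even.mpr h1), if_pos ho, h1.neg_one_pow, one_mul]

lemma conj_exp_neg_I_mul (x : ℝ) :
    (starRingEnd ℂ) (Complex.exp (-Complex.I * (x : ℂ))) = Complex.exp (Complex.I * (x : ℂ)) := by
  rw [← Complex.exp_conj]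
  simp

/-- One step with coefficient `-s` and phase `x`, followed by one step with coefficient `s` and
phase `y`. -/
lemma compose_two_steps (s x y : ℝ) (h₁ : 1 - s ≠ 0) (h₂ : 1 + s ≠ 0) (b₀ b₁ b₂ : ℂ)
    (hb₁ : b₁ = (1 / (1 + ((-s : ℝ) : ℂ))) * (Complex.exp (-Complex.I * (x : ℂ)) * b₀ +
      ((-s : ℝ) : ℂ) * (starRingEnd ℂ) (Complex.exp (-Complex.I * (x : ℂ)) * b₀)))
    (hb₂ : b₂ = (1 / (1 + (s : ℂ))) * (Complex.exp (-Complex.I * (y : ℂ)) * b₁ +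
      (s : ℂ) * (starRingEnd ℂ) (Complex.exp (-Complex.I * (y : ℂ)) * b₁))) :
    b₂ = (Complex.exp (-Complex.I * ((x : ℂ) + (y : ℂ))) / (1 - (s : ℂ) ^ 2)) *
      ((1 - (s : ℂ) ^ 2 * Complex.exp (2 * Complex.I * (y : ℂ))) * b₀ +
        -(s : ℂ) * (1 - Complex.exp (2 * Complex.I * (y : ℂ))) *
          Complex.exp (2 * Complex.I * (x : ℂ)) * (starRingEnd ℂ) b₀) := by
  have h₁' : (1 : ℂ) - s ≠ 0 := by exact_mod_cast h₁
  have h₂' : (1 : ℂ) + s ≠ 0 := by exact_mod_cast h₂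
  have hinv : ∀ z : ℝ,
      Complex.exp (-Complex.I * (z : ℂ)) = (Complex.exp (Complex.I * (z : ℂ)))⁻¹ := fun z => by
    rw [← Complex.exp_neg, neg_mul]
  have hsq : ∀ z : ℝ,
      Complex.exp (2 * Complex.I * (z : ℂ)) = Complex.exp (Complex.I * (z : ℂ)) ^ 2 := fun z => by
    rw [← Complex.exp_nat_mul]
    push_cast
    ring_nf
  have hfac : (1 : ℂ) - (s : ℂ) ^ 2 = (1 - s) * (1 + s) := by ring
  have hx := Complex.exp_ne_zero (Complex.I * (x : ℂ))
  have hy := Complex.exp_ne_zero (Complex.I * (y : ℂ))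
  have hconj : (starRingEnd ℂ) b₁ = (1 / (1 - (s : ℂ))) *
      (Complex.exp (Complex.I * (x : ℂ)) * (starRingEnd ℂ) b₀ -
        s * (Complex.exp (-Complex.I * (x : ℂ)) * b₀)) := by
    rw [hb₁, map_mul, map_add, map_mul _ (((-s : ℝ) : ℂ)), Complex.conj_conj]
    simp only [map_mul, map_add, map_div₀, map_one, Complex.conj_ofReal, conj_exp_neg_I_mul]
    push_cast
    ring
  rw [hb₂, map_mul, hconj, hb₁, map_mul, conj_exp_neg_I_mul, conj_exp_neg_I_mul,
    mul_add (-Complex.I), Complex.exp_add, hsq, hsq, hinv, hinv, hfac, Complex.ofReal_neg, ← sub_eq_add_neg]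
  generalize Complex.exp (Complex.I * (x : ℂ)) = X at *
  generalize Complex.exp (Complex.I * (y : ℂ)) = Y at *
  field_simp
  ring

/-- For the oscillating wave speed (`c j = c₁` for odd `j`, `c₂` for even `j`,
so that `q ℓ = (-1)^(ℓ+1) q` with `q = (c₂ - c₁)/(c₂ + c₁)`), the sequence `β` satisfies the
two-step recursion
`β ℓ = (e^{-i(δ_{ℓ-1}+δ_ℓ)}/(1-q²)) ((1 - q² e^{2iδ_ℓ}) β_{ℓ-2}
        + (-1)^ℓ q (1 - e^{2iδ_ℓ}) e^{2iδ_{ℓ-1}} conj β_{ℓ-2})` for `2 ≤ ℓ ≤ n`. -/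
theorem beta_two_step_recursion
    (n : ℕ) (ω : ℝ) (hω : 0 < ω) (c₁ c₂ : ℝ) (hc₁ : 0 < c₁) (hc₂ : 0 < c₂)
    (h : ℕ → ℝ) (hh : ∀ j, 1 ≤ j → j ≤ n + 1 → 0 < h j)
    (c : ℕ → ℝ) (hc : ∀ j, c j = if Odd j then c₁ else c₂)
    (δ : ℕ → ℝ) (hδ : ∀ ℓ, δ ℓ = ω * h ℓ / c ℓ)
    (q : ℝ) (hqdef : q = (c₂ - c₁) / (c₂ + c₁))
    (qs : ℕ → ℝ) (hqs : ∀ ℓ, qs ℓ = (c (ℓ + 1) - c ℓ) / (c (ℓ + 1) + c ℓ))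
    (β : ℕ → ℂ) (hβ0 : β 0 = 1)
    (hβ : ∀ ℓ, 1 ≤ ℓ → ℓ ≤ n →
      β ℓ = (1 / (1 + (qs ℓ : ℂ))) *
        (Complex.exp (-Complex.I * (δ ℓ : ℂ)) * β (ℓ - 1) +
          (qs ℓ : ℂ) * (starRingEnd ℂ)
            (Complex.exp (-Complex.I * (δ ℓ : ℂ)) * β (ℓ - 1)))) :
    ∀ ℓ, 2 ≤ ℓ → ℓ ≤ n →
      β ℓ = (Complex.exp (-Complex.I * ((δ (ℓ - 1) : ℂ) + (δ ℓ : ℂ))) / (1 - (q : ℂ) ^ 2)) *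
        ((1 - (q : ℂ) ^ 2 * Complex.exp (2 * Complex.I * (δ ℓ : ℂ))) * β (ℓ - 2) +
          (-1 : ℂ) ^ ℓ * (q : ℂ) * (1 - Complex.exp (2 * Complex.I * (δ ℓ : ℂ))) *
            Complex.exp (2 * Complex.I * (δ (ℓ - 1) : ℂ)) * (starRingEnd ℂ) (β (ℓ - 2))) := by
  intro ℓ hℓ hn
  obtain ⟨k, rfl⟩ : ∃ k, ℓ = k + 2 := ⟨ℓ - 2, by omega⟩
  have e₁ : k + 2 - 1 = k + 1 := rfl
  have e₂ : k + 2 - 2 = k := rfl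
  have hstep₁ := hβ (k + 1) (by omega) (by omega)
  have hstep₂ := hβ (k + 2) (by omega) hn
  rw [Nat.add_sub_cancel] at hstep₁
  rw [e₁] at hstep₂ ⊢
  rw [e₂]
  have hs₂ : qs (k + 2) = (-1) ^ (k + 3) * q := by
    rw [hqs, hqdef, oscillating_coefficient c₁ c₂ c hc]
  have hs₁ : qs (k + 1) = -qs (k + 2) := by
    rw [hs₂, hqs, hqdef, oscillating_coefficient c₁ c₂ c hc]
    ring
  -- Both `1 ± qs ℓ` are of the form `2 c / (c + c')` with positive speeds.
  have hpos : ∀ j, 0 < c j := fun j => by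
    rw [hc]
    split_ifs <;> assumption
  have hne : ∀ j, 1 + qs j ≠ 0 := fun j => by
    have h₁ := hpos j
    have h₂ := hpos (j + 1)
    have heq : 1 + qs j = 2 * c (j + 1) / (c (j + 1) + c j) := by
      rw [hqs]
      field_simp
      ring
    rw [heq]
    positivity
  have hsub : 1 - qs (k + 2) ≠ 0 := by
    rw [sub_eq_add_neg, ← hs₁]
    exact hne _
  rw [hs₁] at hstep₁
  rw [compose_two_steps _ _ _ hsub (hne _) _ _ _ hstep₁ hstep₂]
  have hsign : -((qs (k + 2) : ℝ) : ℂ) = (-1) ^ (k + 2) * (q : ℂ) := by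
    rw [hs₂]
    push_cast
    ring
  have hsquare : ((qs (k + 2) : ℝ) : ℂ) ^ 2 = (q : ℂ) ^ 2 := by
    rw [← neg_sq, hsign, mul_pow, ← pow_mul, mul_comm (k + 2) 2, pow_mul, neg_one_sq, one_pow,
      one_mul]
  rw [hsign, hsquare]
end

section
/- Let n ∈ ℕ and let (γ⁺_ℓ)_{ℓ=1}^{n}, (γ⁻_ℓ)_{ℓ=1}^{n} be complex sequences. Define w^{1,1}_ℓ := −γ⁻_ℓ, w^{1,2}_ℓ := −(conj(γ⁺_ℓ) + γ⁻_ℓ)/2, w^{2,1}_ℓ := −(γ⁺_ℓ + γ⁻_ℓ)/2, w^{2,2}_ℓ := −(γ⁺_ℓ + γ⁻_ℓ + conj(γ⁺_ℓ) + conj(γ⁻_ℓ))/4. Define W_{0,1} := 1, W_{0,2} := 0 and, for ℓ ≥ 1 and q ∈ {1,2}, W_{ℓ,q} := W_{ℓ−1,1} · w^{2,q}_ℓ − W_{ℓ−1,2} · w^{1,q}_ℓ. Define β̃₀ := 1 and β̃_ℓ := ½ ( γ⁺_ℓ β̃_{ℓ−1} − (−1)^{ℓ} γ⁻_ℓ ·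 conj(β̃_{ℓ−1}) ) for ℓ ≥ 1. Then for every 1 ≤ m ≤ n: W_{m,1} = (−1)^{m} β̃_m and W_{m,2} = −( conj(β̃_m) − (−1)^{m} β̃_m ) / 2. -/
/-! The proof is by induction on the index, both formulas being carried together from `m = 0`.
Substituting them into the recursion for `W` gives, with `s = (-1)^k` and `b = β̃ k`,
`W (k+1) 1 = -(s b γ⁺ + conj b γ⁻)/2` and
`W (k+1) 2 = -(s b γ⁺ + s b conj γ⁻ + conj b conj γ⁺ + conj b γ⁻)/4`,
which are the claimed expressions in `β̃ (k+1)` and its conjugate because `s² = 1`. -/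

/-- Given complex sequences `γ⁺, γ⁻`, define
`w¹¹ ℓ = -γ⁻ ℓ`, `w¹² ℓ = -(conj(γ⁺ ℓ) + γ⁻ ℓ)/2`, `w²¹ ℓ = -(γ⁺ ℓ + γ⁻ ℓ)/2`,
`w²² ℓ = -(γ⁺ ℓ + γ⁻ ℓ + conj(γ⁺ ℓ) + conj(γ⁻ ℓ))/4`, the determinant sequence
`W 0 1 = 1`, `W 0 2 = 0`, `W ℓ q = W (ℓ-1) 1 · w²q ℓ - W (ℓ-1) 2 · w¹q ℓ`, and the
recursion `β̃ 0 = 1`, `β̃ ℓ = ½ (γ⁺ ℓ β̃ (ℓ-1) - (-1)^ℓ γ⁻ ℓ conj(β̃ (ℓ-1)))`.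
Then `W m 1 = (-1)^m β̃ m` and `W m 2 = -(conj(β̃ m) - (-1)^m β̃ m)/2` for `1 ≤ m ≤ n`. -/
theorem determinant_sequence_representation
    (n : ℕ) (γp γm : ℕ → ℂ)
    (w : ℕ → ℕ → ℕ → ℂ)
    (hw11 : ∀ ℓ, w 1 1 ℓ = -γm ℓ)
    (hw12 : ∀ ℓ, w 1 2 ℓ = -((starRingEnd ℂ) (γp ℓ) + γm ℓ) / 2)
    (hw21 : ∀ ℓ, w 2 1 ℓ = -(γp ℓ + γm ℓ) / 2)
    (hw22 : ∀ ℓ, w 2 2 ℓ =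
      -(γp ℓ + γm ℓ + (starRingEnd ℂ) (γp ℓ) + (starRingEnd ℂ) (γm ℓ)) / 4)
    (W : ℕ → ℕ → ℂ)
    (hW01 : W 0 1 = 1) (hW02 : W 0 2 = 0)
    (hW : ∀ ℓ, 1 ≤ ℓ → ∀ qq, qq = 1 ∨ qq = 2 →
      W ℓ qq = W (ℓ - 1) 1 * w 2 qq ℓ - W (ℓ - 1) 2 * w 1 qq ℓ)
    (βt : ℕ → ℂ) (hβt0 : βt 0 = 1)
    (hβt : ∀ ℓ, 1 ≤ ℓ →
      βt ℓ = (1 / 2) * (γp ℓ * βt (ℓ - 1) -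
        (-1 : ℂ) ^ ℓ * γm ℓ * (starRingEnd ℂ) (βt (ℓ - 1)))) :
    ∀ m, 1 ≤ m → m ≤ n →
      W m 1 = (-1 : ℂ) ^ m * βt m ∧
      W m 2 = -(((starRingEnd ℂ) (βt m) - (-1 : ℂ) ^ m * βt m) / 2) := by
  -- The base case `m = 0` of the induction also satisfies both formulas.
  have key : ∀ m, W m 1 = (-1 : ℂ) ^ m * βt m ∧
      W m 2 = -(((starRingEnd ℂ) (βt m) - (-1 : ℂ) ^ m * βt m) / 2) := by
    intro m
    induction m with
    | zero => simp [hW01, hW02, hβt0]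
    | succ k ih =>
      obtain ⟨h1, h2⟩ := ih
      have hs : ((-1 : ℂ) ^ k) * (-1 : ℂ) ^ k = 1 := by
        rw [← mul_pow]; simp
      have hb := hβt (k + 1) (by omega)
      have hc := congrArg (starRingEnd ℂ) hb
      simp only [map_mul, map_sub, map_div₀, map_one, map_pow, map_neg, map_ofNat,
        Complex.conj_conj] at hc
      have hA := hW (k + 1) (by omega) 1 (Or.inl rfl)
      have hB := hW (k + 1) (by omega) 2 (Or.inr rfl)
      simp only [Nat.add_sub_cancel, pow_succ] at hb hc hA hB ⊢
      rw [h1, h2, hw11, hw21] at hA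
      rw [h1, h2, hw12, hw22] at hB
      rw [hA, hB, hc, hb]
      -- After expansion, the two sides differ by a multiple of `((-1) ^ k) ^ 2 - 1`.
      constructor
      · linear_combination
          (1 / 2) * γm (k + 1) * (starRingEnd ℂ) (βt k) * hs
      · linear_combination
          (1 / 4) * γm (k + 1) * (starRingEnd ℂ) (βt k) * hs
  exact fun m _ _ => key m
end
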